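/- Every Klee graph on n vertices has exactly 2^(n/2 − 1) circuit double covers. -/

import Mathlib

namespace CiDC

open SimpleGraph

/-- A circuit in a graph: a connected 2-regular subgraph. -/
def IsCircuit {V : Type*} {G : SimpleGraph V} (H : G.Subgraph) : Prop :=
  H.Connected ∧ ∀ v ∈ H.verts, (H.neighborSet v).ncard = 2

open scoped Classical in
/-- A circuit double cover: a multiset of circuits covering every edge exactly twice
(counted with multiplicity). -/
def IsCiDC {V : Type*} (G : SimpleGraph V) (C : Multiset G.Subgraph) : Prop :=
  (∀ H ∈ C, IsCircuit H) ∧ ∀ e ∈ G.edgeSet, C.countP (fun H => e ∈ H.edgeSet) = 2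

/-- ν(G): the number of circuit double covers of `G`. -/
noncomputable def nu {V : Type*} (G : SimpleGraph V) : ℕ :=
  {C : Multiset G.Subgraph | IsCiDC G C}.ncard

/-- A cubic graph: every vertex has degree 3. -/
def IsCubic {V : Type*} (G : SimpleGraph V) : Prop :=
  ∀ v : V, (G.neighborSet v).ncard = 3


/-- Adjacency of the graph obtained by expanding the vertex `v` (with neighbors
`a`, `b`, `c`) into a triangle on three new vertices. -/
def TriangleExpansionAdj {V : Type*} (G : SimpleGraph V) (v a b c : V) :
    ({x : V // x ≠ v} ⊕ Fin 3) → ({x : V // x ≠ v} ⊕ Fin 3) → Prop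
  | Sum.inl u, Sum.inl w => G.Adj u.1 w.1
  | Sum.inr i, Sum.inr j => i ≠ j
  | Sum.inl u, Sum.inr i => (i = 0 ∧ u.1 = a) ∨ (i = 1 ∧ u.1 = b) ∨ (i = 2 ∧ u.1 = c)
  | Sum.inr i, Sum.inl u => (i = 0 ∧ u.1 = a) ∨ (i = 1 ∧ u.1 = b) ∨ (i = 2 ∧ u.1 = c)

/-- The class of Klee graphs: `K₄` is a Klee graph, and the class is closed under
expanding a vertex (with its three distinct neighbors) into a triangle. -/
inductive IsKlee : ∀ {V : Type}, SimpleGraph V → Prop where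
  | base : IsKlee (completeGraph (Fin 4))
  | expand {V : Type} {G : SimpleGraph V} (v a b c : V)
      (hab : a ≠ b) (hac : a ≠ c) (hbc : b ≠ c)
      (hnbr : G.neighborSet v = {a, b, c})
      (G' : SimpleGraph ({x : V // x ≠ v} ⊕ Fin 3))
      (hG' : ∀ p q, G'.Adj p q ↔ TriangleExpansionAdj G v a b c p q)
      (hK : IsKlee G) : IsKlee G'


set_option linter.unusedSimpArgs false

/-! ### Relational reformulation of circuits -/

/-- degree zero or two at `x` -/
def Ev {V : Type*} (R : V → V → Prop) (x : V) : Prop :=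
  (∃ y, R x y) → {y | R x y}.ncard = 2

/-- connectedness of the support of `R` -/
def Conn {V : Type*} (R : V → V → Prop) : Prop :=
  ∀ S : Set V, (∀ x y, R x y → x ∈ S → y ∈ S) →
    ∀ x y x' y', R x x' → R y y' → x ∈ S → y ∈ S

/-- The vertex set is the support -/
def Full {V : Type*} {G : SimpleGraph V} (H : G.Subgraph) : Prop :=
  ∀ x, x ∈ H.verts ↔ ∃ y, H.Adj x y

def Circ {V : Type*} (R : V → V → Prop) : Prop :=
  (∃ x y, R x y) ∧ (∀ x, Ev R x) ∧ Conn R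

lemma isCircuit_iff {V : Type*} {G : SimpleGraph V} (H : G.Subgraph) :
    IsCircuit H ↔ Full H ∧ Circ H.Adj := by
  constructor
  · rintro ⟨hc, h2⟩
    have hfull : Full H := by
      intro x
      constructor
      · intro hx
        have h := h2 x hx
        have hne : (H.neighborSet x).Nonempty := by
          apply Set.nonempty_of_ncard_ne_zero; omega
        exact hne
      · rintro ⟨y, hy⟩
        exact H.edge_vert hy
    refine ⟨hfull, ?_, ?_, ?_⟩
    · obtain ⟨x, hx⟩ := hc.nonempty
      obtain ⟨y, hy⟩ := (hfull x).1 hx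
      exact ⟨x, y, hy⟩
    · rintro x ⟨y, hy⟩
      exact h2 x (H.edge_vert hy)
    · intro S hS x y x' y' hx hy hxS
      have hr : H.coe.Reachable ⟨x, H.edge_vert hx⟩ ⟨y, H.edge_vert hy⟩ :=
        hc.coe.preconnected _ _
      rw [SimpleGraph.reachable_iff_reflTransGen] at hr
      have key : ∀ z : H.verts, Relation.ReflTransGen H.coe.Adj ⟨x, H.edge_vert hx⟩ z →
          z.1 ∈ S := by
        intro z hz
        induction hz with
        | refl => exact hxS
        | tail _ h ih => exact hS _ _ h ih
      exact key _ hr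
  · rintro ⟨hf, ⟨x0, y0, h0⟩, he, hc⟩
    refine ⟨?_, fun x hx => he x ((hf x).1 hx)⟩
    rw [SimpleGraph.Subgraph.connected_iff']
    have : Nonempty H.verts := ⟨⟨x0, H.edge_vert h0⟩⟩
    refine ⟨?_⟩
    rintro ⟨x, hx⟩ ⟨y, hy⟩
    obtain ⟨x', hx'⟩ := (hf x).1 hx
    obtain ⟨y', hy'⟩ := (hf y).1 hy
    have := hc {z | ∃ hz : z ∈ H.verts, H.coe.Reachable ⟨x, hx⟩ ⟨z, hz⟩} ?_ x y x' y' hx' hy'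
      ⟨hx, SimpleGraph.Reachable.refl _⟩
    · obtain ⟨_, h⟩ := this
      exact h
    · rintro p q hpq ⟨hp, hr⟩
      refine ⟨H.edge_vert hpq.symm, hr.trans ?_⟩
      apply SimpleGraph.Adj.reachable
      exact hpq

lemma ext_full {V : Type*} {G : SimpleGraph V} {H K : G.Subgraph} (hH : Full H) (hK : Full K)
    (h : ∀ x y, H.Adj x y ↔ K.Adj x y) : H = K := by
  apply SimpleGraph.Subgraph.ext
  · ext x
    rw [hH x, hK x]
    simp only [h]
  · ext x y
    exact h x y

lemma ev3 {V : Type*} (R : V → V → Prop) (x p q r : V) (hpq : p ≠ q) (hpr : p ≠ r) (hqr : q ≠ r)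
    (hR : ∀ y, R x y → y = p ∨ y = q ∨ y = r) :
    Ev R x ↔ (R x p ↔ ¬ (R x q ↔ R x r)) := by
  have hset : {y | R x y} = {y | (y = p ∧ R x p) ∨ (y = q ∧ R x q) ∨ (y = r ∧ R x r)} := by
    ext y
    constructor
    · intro h
      rcases hR y h with rfl | rfl | rfl <;> simp_all
    · rintro (⟨rfl, h⟩ | ⟨rfl, h⟩ | ⟨rfl, h⟩) <;> exact h
  have hex : (∃ y, R x y) ↔ (R x p ∨ R x q ∨ R x r) := by
    constructor
    · rintro ⟨y, h⟩
      rcases hR y h with rfl | rfl | rfl <;> simp_all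
    · rintro (h | h | h) <;> exact ⟨_, h⟩
  have e3 : ({y | y = p ∨ y = q ∨ y = r} : Set V).ncard = 3 := by
    rw [Set.ncard_eq_three]; exact ⟨p, q, r, hpq, hpr, hqr, rfl⟩
  have e2 : ∀ a b : V, a ≠ b → ({y | y = a ∨ y = b} : Set V).ncard = 2 := by
    intro a b hab; rw [Set.ncard_eq_two]; exact ⟨a, b, hab, rfl⟩
  unfold Ev
  rw [hset, hex]
  by_cases h1 : R x p <;> by_cases h2 : R x q <;> by_cases h3 : R x r <;>
    simp [h1, h2, h3, e3, e2 _ _ hpq, e2 _ _ hpr, e2 _ _ hqr]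

/-- subgraph from a relation -/
def sub {V : Type*} {G : SimpleGraph V} (R : V → V → Prop) (hs : ∀ x y, R x y → R y x)
    (hG : ∀ x y, R x y → G.Adj x y) : G.Subgraph where
  verts := {x | ∃ y, R x y}
  Adj := R
  adj_sub := fun h => hG _ _ h
  edge_vert := fun h => ⟨_, h⟩
  symm := ⟨fun x y h => hs x y h⟩

lemma sub_full {V : Type*} {G : SimpleGraph V} (R : V → V → Prop) (hs : ∀ x y, R x y → R y x)
    (hG : ∀ x y, R x y → G.Adj x y) : Full (sub R hs hG) := fun _ => Iff.rfl

/-- classical counting -/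
noncomputable def cnt {α : Type*} (C : Multiset α) (p : α → Prop) : ℕ :=
  @Multiset.countP α p (Classical.decPred p) C

lemma cnt_zero {α : Type*} (p : α → Prop) : cnt (0 : Multiset α) p = 0 := by
  simp [cnt]

open scoped Classical in
lemma cnt_cons {α : Type*} (a : α) (C : Multiset α) (p : α → Prop) :
    cnt (a ::ₘ C) p = cnt C p + if p a then 1 else 0 := by
  unfold cnt
  rw [Multiset.countP_cons]

lemma cnt_pos_ex {α : Type*} {C : Multiset α} {p : α → Prop} (h : 0 < cnt C p) :
    ∃ H ∈ C, p H :=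
  (@Multiset.countP_pos _ p (Classical.decPred p) C).1 h

lemma cnt_eq {α : Type*} (C : Multiset α) (p : α → Prop) [DecidablePred p] :
    cnt C p = C.countP p := by
  unfold cnt
  congr

lemma cnt_map {α β : Type*} (f : α → β) (C : Multiset α) (p : β → Prop) :
    cnt (C.map f) p = cnt C (fun a => p (f a)) := by
  induction C using Multiset.induction_on with
  | empty => simp [cnt_zero]
  | cons a s ih => rw [Multiset.map_cons, cnt_cons, cnt_cons, ih]

lemma cnt_congr {α : Type*} {C : Multiset α} {p q : α → Prop} (h : ∀ a ∈ C, p a ↔ q a) :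
    cnt C p = cnt C q := by
  induction C using Multiset.induction_on with
  | empty => simp [cnt_zero]
  | cons a s ih =>
    rw [cnt_cons, cnt_cons, ih (fun b hb => h b (Multiset.mem_cons_of_mem hb))]
    have ha := h a (Multiset.mem_cons_self a s)
    by_cases hq : q a <;> simp [hq, ha]

open scoped Classical in
lemma isCiDC_iff {V : Type*} (G : SimpleGraph V) (C : Multiset G.Subgraph) :
    IsCiDC G C ↔ (∀ H ∈ C, Full H ∧ Circ H.Adj) ∧
      ∀ x y, G.Adj x y → cnt C (fun H => H.Adj x y) = 2 := by
  unfold IsCiDC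
  simp only [isCircuit_iff]
  refine and_congr Iff.rfl ⟨fun h x y hxy => ?_, fun h e => ?_⟩
  · have := h s(x, y) hxy
    rw [← this]; unfold cnt; congr
  · induction e using Sym2.ind with
    | _ x y =>
      intro hxy
      rw [← h x y hxy]; unfold cnt; congr

/-! ### Counting -/

open scoped Classical in
lemma countP_classify {α β : Type*} [Fintype β] (f : α → β) (C : Multiset α)
    (p : α → Prop) (q : β → Prop) (h : ∀ H ∈ C, p H ↔ q (f H)) :
    cnt C p = ∑ b, if q b then cnt C (fun H => f H = b) else 0 := by
  induction C using Multiset.induction_on with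
  | empty => simp [cnt_zero]
  | cons a s ih =>
    rw [cnt_cons, ih (fun H hH => h H (Multiset.mem_cons_of_mem hH))]
    simp only [cnt_cons]
    have ha := h a (Multiset.mem_cons_self a s)
    have : ∀ b, (if q b then (cnt s (fun H => f H = b) + if f a = b then 1 else 0) else 0)
        = (if q b then cnt s (fun H => f H = b) else 0) + 
          (if b = f a then (if q (f a) then 1 else 0) else 0) := by
      intro b
      by_cases hb : b = f a
      · subst hb; by_cases hq : q (f a) <;> simp [hq]
      · simp [hb, Ne.symm hb]
    simp only [this, Finset.sum_add_distrib, Finset.sum_ite_eq', Finset.mem_univ, if_true]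
    by_cases hq : q (f a) <;> simp [hq, ha]

open scoped Classical in
lemma cnt_zero_not {α : Type*} {C : Multiset α} {p : α → Prop} (h : cnt C p = 0) :
    ∀ H ∈ C, ¬ p H := by
  intro H hH hp
  have := (@Multiset.countP_pos _ p (Classical.decPred p) C).2 ⟨H, hH, hp⟩
  unfold cnt at h
  omega

/-- the state of three propositions -/
noncomputable def bits (p q r : Prop) : Bool × Bool × Bool := by
  classical exact (decide p, decide q, decide r)

lemma bits_eq (p q r : Prop) (a b c : Bool) :
    bits p q r = (a, b, c) ↔ (p ↔ a = true) ∧ (q ↔ b = true) ∧ (r ↔ c = true) := by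
  unfold bits
  cases a <;> cases b <;> cases c <;> simp

open scoped Classical in
/-- Master count: -/
lemma master {α : Type*} (C : Multiset α) (t0 t1 t2 s0 s1 s2 : α → Prop)
    (h0 : ∀ H ∈ C, s0 H ↔ ¬ (t1 H ↔ t2 H)) (h1 : ∀ H ∈ C, s1 H ↔ ¬ (t0 H ↔ t2 H))
    (h2 : ∀ H ∈ C, s2 H ↔ ¬ (t0 H ↔ t1 H))
    (ct0 : cnt C t0 = 2) (ct1 : cnt C t1 = 2) (ct2 : cnt C t2 = 2)
    (cs0 : cnt C s0 = 2) (cs1 : cnt C s1 = 2) (cs2 : cnt C s2 = 2) :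
    let n := fun b => cnt C (fun H => bits (t0 H) (t1 H) (t2 H) = b)
    (n (true, true, true) = 1 ∧ n (true, false, false) = 1 ∧ n (false, true, false) = 1 ∧
      n (false, false, true) = 1 ∧ n (false, true, true) = 0 ∧ n (true, false, true) = 0 ∧
      n (true, true, false) = 0) ∨
    (n (true, true, true) = 0 ∧ n (true, false, false) = 0 ∧ n (false, true, false) = 0 ∧
      n (false, false, true) = 0 ∧ n (false, true, true) = 1 ∧ n (true, false, true) = 1 ∧
      n (true, true, false) = 1) := by
  intro n
  set f := fun H => bits (t0 H) (t1 H) (t2 H) with hf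
  rw [countP_classify f C _ (fun b => b.1 = true) (by intro H _; simp [hf, bits])] at ct0
  rw [countP_classify f C _ (fun b => b.2.1 = true) (by intro H _; simp [hf, bits])] at ct1
  rw [countP_classify f C _ (fun b => b.2.2 = true) (by intro H _; simp [hf, bits])] at ct2
  rw [countP_classify f C _ (fun b => ¬ (b.2.1 = true ↔ b.2.2 = true))
    (by intro H hH; rw [h0 H hH]; simp [hf, bits])] at cs0
  rw [countP_classify f C _ (fun b => ¬ (b.1 = true ↔ b.2.2 = true))
    (by intro H hH; rw [h1 H hH]; simp [hf, bits])] at cs1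
  rw [countP_classify f C _ (fun b => ¬ (b.1 = true ↔ b.2.1 = true))
    (by intro H hH; rw [h2 H hH]; simp [hf, bits])] at cs2
  simp only [Fintype.sum_prod_type, Fintype.univ_bool, Finset.sum_insert, Finset.mem_singleton,
    Finset.sum_singleton, reduceCtorEq, not_false_eq_true, if_true, if_false, not_true,
    iff_true, iff_false, true_iff, false_iff, iff_self] at ct0 ct1 ct2 cs0 cs1 cs2
  have hn : ∀ b, cnt C (fun H => f H = b) = n b := fun b => rfl
  simp only [hn] at ct0 ct1 ct2 cs0 cs1 cs2
  clear_value n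
  omega

open scoped Classical in
/-- if three bits are always of even parity, each counted twice, each pair occurs once -/
lemma pair_count {α : Type*} (C : Multiset α) (u0 u1 u2 : α → Prop)
    (h : ∀ H ∈ C, u0 H ↔ ¬ (u1 H ↔ u2 H))
    (c0 : cnt C u0 = 2) (c1 : cnt C u1 = 2) (c2 : cnt C u2 = 2) :
    cnt C (fun H => u0 H ∧ u1 H) = 1 ∧ cnt C (fun H => u0 H ∧ u2 H) = 1 ∧
    cnt C (fun H => u1 H ∧ u2 H) = 1 := by
  set f := fun H => bits (u1 H) (u2 H) False with hf
  rw [countP_classify f C _ (fun b => b.1 = true) (by intro H _; simp [hf, bits])] at c1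
  rw [countP_classify f C _ (fun b => b.2.1 = true) (by intro H _; simp [hf, bits])] at c2
  rw [countP_classify f C _ (fun b => ¬ (b.1 = true ↔ b.2.1 = true))
    (by intro H hH; rw [h H hH]; simp [hf, bits])] at c0
  rw [countP_classify f C (fun H => u0 H ∧ u1 H) (fun b => b.1 = true ∧ b.2.1 = false)
    (by intro H hH; rw [h H hH]; simp [hf, bits]; tauto)]
  rw [countP_classify f C (fun H => u0 H ∧ u2 H) (fun b => b.1 = false ∧ b.2.1 = true)
    (by intro H hH; rw [h H hH]; simp [hf, bits]; tauto)]
  rw [countP_classify f C (fun H => u1 H ∧ u2 H) (fun b => b.1 = true ∧ b.2.1 = true)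
    (by intro H hH; simp [hf, bits])]
  simp only [Fintype.sum_prod_type, Fintype.univ_bool, Finset.sum_insert, Finset.mem_singleton,
    Finset.sum_singleton, reduceCtorEq, not_false_eq_true, if_true, if_false, not_true,
    iff_true, iff_false, true_iff, false_iff, iff_self, and_true, and_false,
    true_and, false_and] at c0 c1 c2 ⊢
  omega

/-! ### Triangle expansion -/

/-- `G'` is the triangle expansion of `G` at `v` with neighbours `n 0, n 1, n 2`. -/
structure Expn {V : Type*} (G : SimpleGraph V) (v : V) (n : Fin 3 → {x : V // x ≠ v})
    (G' : SimpleGraph ({x : V // x ≠ v} ⊕ Fin 3)) : Prop where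
  inj : Function.Injective n
  hv : ∀ x : {x : V // x ≠ v}, G.Adj v x ↔ ∃ i, x = n i
  ll : ∀ x y, G'.Adj (Sum.inl x) (Sum.inl y) ↔ G.Adj x y
  rl : ∀ i x, G'.Adj (Sum.inr i) (Sum.inl x) ↔ x = n i
  rr : ∀ i j, G'.Adj (Sum.inr i) (Sum.inr j) ↔ i ≠ j

/-- projection -/
def proj {V : Type*} (v : V) : ({x : V // x ≠ v} ⊕ Fin 3) → V
  | Sum.inl x => x.1
  | Sum.inr _ => v

section expansion

variable {V : Type*} {G : SimpleGraph V} {v : V} {n : Fin 3 → {x : V // x ≠ v}}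
  {G' : SimpleGraph ({x : V // x ≠ v} ⊕ Fin 3)}

lemma Expn.lr (E : Expn G v n G') (i x) : G'.Adj (Sum.inl x) (Sum.inr i) ↔ x = n i := by
  rw [G'.adj_comm]; exact E.rl i x

lemma Expn.proj_adj (E : Expn G v n G') {p q} (h : G'.Adj p q) (hne : proj v p ≠ proj v q) :
    G.Adj (proj v p) (proj v q) := by
  rcases p with x | i <;> rcases q with y | j
  · exact (E.ll x y).1 h
  · exact ((E.hv x).2 ⟨j, (E.lr j x).1 h⟩).symm
  · exact (E.hv y).2 ⟨i, (E.rl i y).1 h⟩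
  · exact absurd rfl hne

/-- edges lift -/
lemma Expn.lift_edge (E : Expn G v n G') {x y} (h : G.Adj x y) :
    ∃ p q, proj v p = x ∧ proj v q = y ∧ G'.Adj p q := by
  by_cases hx : x = v
  · subst hx
    have hy : y ≠ x := h.ne'
    obtain ⟨i, hi⟩ := (E.hv ⟨y, hy⟩).1 h
    exact ⟨Sum.inr i, Sum.inl ⟨y, hy⟩, rfl, rfl, (E.rl _ _).2 hi⟩
  · by_cases hy : y = v
    · subst hy
      obtain ⟨i, hi⟩ := (E.hv ⟨x, hx⟩).1 h.symm
      exact ⟨Sum.inl ⟨x, hx⟩, Sum.inr i, rfl, rfl, (E.lr _ _).2 hi⟩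
    · exact ⟨Sum.inl ⟨x, hx⟩, Sum.inl ⟨y, hy⟩, rfl, rfl, (E.ll _ _).2 h⟩

/-- unique lifts -/
lemma Expn.lift_unique (E : Expn G v n G') {p q p' q'} (h : G'.Adj p q) (h' : G'.Adj p' q')
    (hp : proj v p = proj v p') (hq : proj v q = proj v q') (hne : proj v p ≠ proj v q) :
    p = p' ∧ q = q' := by
  rcases p with x | i <;> rcases q with y | j <;> rcases p' with x' | i' <;>
    rcases q' with y' | j' <;> simp only [proj] at hp hq hne
  · exact ⟨congrArg _ (Subtype.ext hp), congrArg _ (Subtype.ext hq)⟩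
  · exact absurd hq y.2
  · exact absurd hp x.2
  · exact absurd hp x.2
  · exact absurd hq.symm y'.2
  · rw [E.lr] at h h'
    have hx : x = x' := Subtype.ext hp
    refine ⟨congrArg _ hx, congrArg _ (E.inj ?_)⟩
    rw [← h, ← h', hx]
  · exact absurd hp x.2
  · exact absurd hp x.2
  · exact absurd hp.symm x'.2
  · exact absurd hp.symm x'.2
  · rw [E.rl] at h h'
    have hy : y = y' := Subtype.ext hq
    refine ⟨congrArg _ (E.inj ?_), congrArg _ hy⟩
    rw [← h, ← h', hy]
  · exact absurd hq y.2
  · exact absurd rfl hne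
  · exact absurd rfl hne
  · exact absurd rfl hne
  · exact absurd rfl hne

/-- contraction of a subgraph -/
def down (E : Expn G v n G') (H : G'.Subgraph) : G.Subgraph :=
  sub (fun x y => x ≠ y ∧ ∃ p q, proj v p = x ∧ proj v q = y ∧ H.Adj p q)
    (by rintro x y ⟨h, p, q, hp, hq, ha⟩; exact ⟨h.symm, q, p, hq, hp, ha.symm⟩)
    (by rintro x y ⟨h, p, q, rfl, rfl, ha⟩; exact E.proj_adj ha.adj_sub h)

lemma down_full (E : Expn G v n G') (H : G'.Subgraph) : Full (down E H) := sub_full _ _ _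

lemma down_adj (E : Expn G v n G') (H : G'.Subgraph) {p q} (h : G'.Adj p q)
    (hne : proj v p ≠ proj v q) : (down E H).Adj (proj v p) (proj v q) ↔ H.Adj p q := by
  constructor
  · rintro ⟨_, p', q', hp, hq, ha⟩
    obtain ⟨rfl, rfl⟩ := E.lift_unique h ha.adj_sub hp.symm hq.symm hne
    exact ha
  · intro ha
    exact ⟨hne, p, q, rfl, rfl, ha⟩

lemma down_spoke (E : Expn G v n G') (H : G'.Subgraph) (i : Fin 3) :
    (down E H).Adj v (n i) ↔ H.Adj (Sum.inr i) (Sum.inl (n i)) :=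
  down_adj E H (p := Sum.inr i) (q := Sum.inl (n i)) ((E.rl _ _).2 rfl) (Ne.symm (n i).2)

lemma down_ev (E : Expn G v n G') (H : G'.Subgraph) (x : {x : V // x ≠ v}) :
    Ev (down E H).Adj x ↔ Ev H.Adj (Sum.inl x) := by
  have hne : ∀ q, G'.Adj (Sum.inl x) q → proj v (Sum.inl x) ≠ proj v q := by
    intro q hq h
    rcases q with y | j
    · have : x = y := Subtype.ext h
      subst this
      exact G'.loopless.irrefl _ hq
    · exact x.2 h
  have himg : {y | (down E H).Adj x y} = proj v '' {q | H.Adj (Sum.inl x) q} := by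
    ext y
    constructor
    · rintro ⟨h, p, q, hp, rfl, ha⟩
      refine ⟨q, ?_, rfl⟩
      rcases p with x' | i
      · have : x' = x := Subtype.ext hp
        subst this
        exact ha
      · exact absurd hp.symm x.2
    · rintro ⟨q, hq, rfl⟩
      exact (down_adj E H hq.adj_sub (hne q hq.adj_sub)).2 hq
  have hinj : Set.InjOn (proj v) {q | H.Adj (Sum.inl x) q} := by
    intro q hq q' hq' h
    exact (E.lift_unique hq.adj_sub hq'.adj_sub rfl h (hne q hq.adj_sub)).2
  have hex : (∃ y, (down E H).Adj x y) ↔ ∃ q, H.Adj (Sum.inl x) q := by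
    have : {y | (down E H).Adj x y}.Nonempty ↔ {q | H.Adj (Sum.inl x) q}.Nonempty := by
      rw [himg, Set.image_nonempty]
    exact this
  unfold Ev
  rw [hex, himg, hinj.ncard_image]

lemma ev_v (E : Expn G v n G') (H : G.Subgraph) : Ev H.Adj v ↔
    (H.Adj v (n 0) ↔ ¬ (H.Adj v (n 1) ↔ H.Adj v (n 2))) := by
  have hd : ∀ i j, i ≠ j → (n i).1 ≠ (n j).1 := by
    intro i j hij h
    exact hij (E.inj (Subtype.ext h))
  apply ev3 _ _ _ _ _ (hd _ _ (by decide)) (hd _ _ (by decide)) (hd _ _ (by decide))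
  intro y hy
  have hyv : y ≠ v := hy.adj_sub.ne'
  obtain ⟨i, hi⟩ := (E.hv ⟨y, hyv⟩).1 hy.adj_sub
  have hi' : y = n i := congrArg Subtype.val hi
  fin_cases i
  · exact Or.inl hi'
  · exact Or.inr (Or.inl hi')
  · exact Or.inr (Or.inr hi')

/-- spokes and triangle edges -/
abbrev spk (n : Fin 3 → {x : V // x ≠ v}) (H : G'.Subgraph) (i : Fin 3) : Prop :=
  H.Adj (Sum.inr i) (Sum.inl (n i))
abbrev tri (H : G'.Subgraph) (i j : Fin 3) : Prop :=
  H.Adj (Sum.inr i) (Sum.inr j)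

lemma ev_r (E : Expn G v n G') (H : G'.Subgraph) (i j k : Fin 3) (hij : i ≠ j) (hik : i ≠ k)
    (hjk : j ≠ k) : Ev H.Adj (Sum.inr i) ↔ (spk n H i ↔ ¬ (tri H i j ↔ tri H i k)) := by
  apply ev3 _ _ _ _ _ (by simp) (by simp) (by simpa using hjk)
  intro y hy
  have h := hy.adj_sub
  rcases y with y | l
  · rw [E.rl] at h
    subst h
    exact Or.inl rfl
  · rw [E.rr] at h
    right
    have : l = j ∨ l = k := by omega
    rcases this with rfl | rfl <;> simp

/-- local evenness at the triangle -/
def Loc (n : Fin 3 → {x : V // x ≠ v}) (H : G'.Subgraph) : Prop :=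
  (spk n H 0 ↔ ¬ (tri H 0 1 ↔ tri H 0 2)) ∧ (spk n H 1 ↔ ¬ (tri H 0 1 ↔ tri H 1 2)) ∧
  (spk n H 2 ↔ ¬ (tri H 0 2 ↔ tri H 1 2))

lemma loc_iff (E : Expn G v n G') (H : G'.Subgraph) :
    Loc n H ↔ ∀ i, Ev H.Adj (Sum.inr i) := by
  have h0 := ev_r E H 0 1 2 (by decide) (by decide) (by decide)
  have h1 := ev_r E H 1 0 2 (by decide) (by decide) (by decide)
  have h2 := ev_r E H 2 0 1 (by decide) (by decide) (by decide)
  have e1 : tri H 1 0 ↔ tri H 0 1 := H.adj_comm _ _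
  have e2 : tri H 2 0 ↔ tri H 0 2 := H.adj_comm _ _
  have e3 : tri H 2 1 ↔ tri H 1 2 := H.adj_comm _ _
  rw [e1] at h1
  rw [e2, e3] at h2
  rw [Fin.forall_fin_succ, Fin.forall_fin_succ, Fin.forall_fin_succ]
  unfold Loc
  rw [← h0, ← h1, ← h2]
  simp

/-- the whole triangle is in `H` -/
def AllT (H : G'.Subgraph) : Prop := tri H 0 1 ∧ tri H 0 2 ∧ tri H 1 2

set_option maxHeartbeats 1000000 in
lemma tri_conn (H : G'.Subgraph) (hl : Loc n H) (hT : ¬ AllT H)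
    (S : Set ({x : V // x ≠ v} ⊕ Fin 3)) (hS : ∀ p q, H.Adj p q → p ∈ S → q ∈ S)
    (i j : Fin 3) (hi : spk n H i ∨ ∃ l, tri H i l) (hj : spk n H j ∨ ∃ l, tri H j l)
    (h : Sum.inr i ∈ S) : Sum.inr j ∈ S := by
  have e1 : tri H 1 0 ↔ tri H 0 1 := H.adj_comm _ _
  have e2 : tri H 2 0 ↔ tri H 0 2 := H.adj_comm _ _
  have e3 : tri H 2 1 ↔ tri H 1 2 := H.adj_comm _ _
  have f0 : ¬ tri H 0 0 := fun h => G'.loopless.irrefl _ h.adj_sub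
  have f1 : ¬ tri H 1 1 := fun h => G'.loopless.irrefl _ h.adj_sub
  have f2 : ¬ tri H 2 2 := fun h => G'.loopless.irrefl _ h.adj_sub
  have hS' : ∀ i j, tri H i j → (Sum.inr i ∈ S ↔ Sum.inr j ∈ S) :=
    fun i j h => ⟨hS _ _ h, hS _ _ h.symm⟩
  have s1 := hS' 0 1
  have s2 := hS' 0 2
  have s3 := hS' 1 2
  obtain ⟨l0, l1, l2⟩ := hl
  unfold AllT at hT
  simp only [Fin.exists_fin_succ, Fin.exists_fin_zero_pi, Fin.succ_zero_eq_one, Fin.succ_one_eq_two, IsEmpty.exists_iff, or_false] at hi hj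
  fin_cases i <;> fin_cases j <;> simp only [Fin.zero_eta, Fin.mk_one, Fin.reduceFinMk] at * <;> first | exact h | skip
  all_goals
    simp only [e1, e2, e3, f0, f1, f2, l0, l1, l2] at hi hj
    clear hS hS' e1 e2 e3 f0 f1 f2 l0 l1 l2
    generalize tri H 0 1 = A at *
    generalize tri H 0 2 = B at *
    generalize tri H 1 2 = D at *
    by_cases hA : A <;> by_cases hB : B <;> by_cases hD : D <;> simp_all

lemma circ_down (E : Expn G v n G') (H : G'.Subgraph) (hl : Loc n H) (hT : ¬ AllT H) :
    Circ (down E H).Adj ↔ Circ H.Adj := by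
  have hsp : ∀ i, (∃ q, H.Adj (Sum.inr i) q) → spk n H i ∨ ∃ l, tri H i l := by
    rintro i ⟨q, hq⟩
    rcases q with x | l
    · have := (E.rl i x).1 hq.adj_sub
      subst this
      exact Or.inl hq
    · exact Or.inr ⟨l, hq⟩
  have hspk : ∀ i, (∃ q, H.Adj (Sum.inr i) q) → ∃ j, spk n H j := by
    intro i hi
    have h1 := hsp i hi
    have e1 : tri H 1 0 ↔ tri H 0 1 := H.adj_comm _ _
    have e2 : tri H 2 0 ↔ tri H 0 2 := H.adj_comm _ _
    have e3 : tri H 2 1 ↔ tri H 1 2 := H.adj_comm _ _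
    have f0 : ¬ tri H 0 0 := fun h => G'.loopless.irrefl _ h.adj_sub
    have f1 : ¬ tri H 1 1 := fun h => G'.loopless.irrefl _ h.adj_sub
    have f2 : ¬ tri H 2 2 := fun h => G'.loopless.irrefl _ h.adj_sub
    rcases h1 with h1 | h1
    · exact ⟨i, h1⟩
    by_contra hcon
    push Not at hcon
    have c0 := hcon 0
    have c1 := hcon 1
    have c2 := hcon 2
    obtain ⟨l0, l1, l2⟩ := hl
    unfold AllT at hT
    simp only [Fin.exists_fin_succ, Fin.exists_fin_zero_pi, Fin.succ_zero_eq_one, Fin.succ_one_eq_two, IsEmpty.exists_iff, or_false] at h1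
    fin_cases i <;> simp only [Fin.zero_eta, Fin.mk_one, Fin.reduceFinMk] at *
    all_goals
      simp only [e1, e2, e3, f0, f1, f2, l0, l1, l2] at h1 c0 c1 c2
      clear hcon hi hsp e1 e2 e3 f0 f1 f2 l0 l1 l2
      tauto
  have hcase : ∀ p q, H.Adj p q → proj v p ≠ proj v q ∨ ∃ i j, p = Sum.inr i ∧ q = Sum.inr j := by
    intro p q hpq
    rcases p with x | i <;> rcases q with y | j
    · left; intro h
      have : x = y := Subtype.ext h
      subst this
      exact G'.loopless.irrefl _ hpq.adj_sub
    · left; exact x.2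
    · left; exact Ne.symm y.2
    · right; exact ⟨i, j, rfl, rfl⟩
  have hsupp : ∀ p, (∃ q, H.Adj p q) → ∃ y, (down E H).Adj (proj v p) y := by
    rintro p ⟨q, hpq⟩
    rcases hcase p q hpq with h | ⟨i, j, rfl, rfl⟩
    · exact ⟨_, (down_adj E H hpq.adj_sub h).2 hpq⟩
    · obtain ⟨k, hk⟩ := hspk i ⟨_, hpq⟩
      exact ⟨_, (down_spoke E H k).2 hk⟩
  have hev : (∀ x, Ev (down E H).Adj x) ↔ ∀ p, Ev H.Adj p := by
    have hlev := (loc_iff E H).1 hl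
    constructor
    · intro h p
      rcases p with x | i
      · exact (down_ev E H x).1 (h x)
      · exact hlev i
    · intro h x
      by_cases hx : x = v
      · subst hx
        rw [ev_v E, down_spoke, down_spoke, down_spoke]
        obtain ⟨l0, l1, l2⟩ := hl
        simp only [spk] at l0 l1 l2
        rw [l0, l1, l2]
        tauto
      · exact (down_ev E H ⟨x, hx⟩).2 (h _)
  unfold Circ
  rw [hev]
  constructor
  · rintro ⟨⟨x, y, hxy⟩, he, hc⟩
    refine ⟨?_, he, ?_⟩
    · obtain ⟨_, p, q, _, _, h⟩ := hxy
      exact ⟨p, q, h⟩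
    · intro S hS p q p' q' hp hq hpS
      have key := hc {x | ∃ p ∈ S, proj v p = x ∧ ∃ q, H.Adj p q} ?_ (proj v p) (proj v q)
      · obtain ⟨y, hy⟩ := hsupp p ⟨p', hp⟩
        obtain ⟨y', hy'⟩ := hsupp q ⟨q', hq⟩
        obtain ⟨r, hr, hrq, r', hrr'⟩ := key y y' hy hy' ⟨p, hpS, rfl, p', hp⟩
        rcases r with x | i <;> rcases q with y | j
        · have : x = y := Subtype.ext hrq
          subst this
          exact hr
        · exact absurd hrq x.2
        · exact absurd hrq.symm y.2
        · exact tri_conn H hl hT S hS i j (hsp i ⟨_, hrr'⟩) (hsp j ⟨_, hq⟩) hr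
      · rintro x y ⟨hne, r, s, rfl, rfl, hrs⟩ ⟨t, htS, ht, t', htt'⟩
        refine ⟨s, ?_, rfl, r, hrs.symm⟩
        apply hS r s hrs
        rcases t with x | i <;> rcases r with y | j
        · have : x = y := Subtype.ext ht
          subst this
          exact htS
        · exact absurd ht x.2
        · exact absurd ht.symm y.2
        · exact tri_conn H hl hT S hS i j (hsp i ⟨_, htt'⟩) (hsp j ⟨_, hrs⟩) htS
  · rintro ⟨⟨p, q, hpq⟩, he, hc⟩
    refine ⟨?_, he, ?_⟩
    · obtain ⟨y, hy⟩ := hsupp p ⟨q, hpq⟩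
      exact ⟨_, y, hy⟩
    · rintro S hS x y x' y' ⟨_, p, p', rfl, rfl, hp⟩ ⟨_, q, q', rfl, rfl, hq⟩ hx
      refine hc (proj v ⁻¹' S) ?_ p q p' q' hp hq hx
      intro r s hrs hr
      rcases hcase r s hrs with h | ⟨i, j, rfl, rfl⟩
      · exact hS _ _ ((down_adj E H hrs.adj_sub h).2 hrs) hr
      · exact hr

/-- the two lifts of a relation -/
def liftR (n : Fin 3 → {x : V // x ≠ v}) (e : Bool) (H : G.Subgraph) :
    ({x : V // x ≠ v} ⊕ Fin 3) → ({x : V // x ≠ v} ⊕ Fin 3) → Prop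
  | Sum.inl x, Sum.inl y => H.Adj x y
  | Sum.inl x, Sum.inr i => x = n i ∧ H.Adj v x
  | Sum.inr i, Sum.inl x => x = n i ∧ H.Adj v x
  | Sum.inr i, Sum.inr j => i ≠ j ∧ ((e = true ∧ ∃ k, k ≠ i ∧ k ≠ j ∧ H.Adj v (n k)) ∨
      (e = false ∧ H.Adj v (n i) ∧ H.Adj v (n j)))

def lift (E : Expn G v n G') (e : Bool) (H : G.Subgraph) : G'.Subgraph :=
  sub (liftR n e H)
    (by
      intro p q h
      rcases p with x | i <;> rcases q with y | j
      · exact H.symm.symm _ _ h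
      · exact h
      · exact h
      · obtain ⟨hij, ⟨he, k, hk, hk', h⟩ | ⟨he, h, h'⟩⟩ := h
        · exact ⟨hij.symm, Or.inl ⟨he, k, hk', hk, h⟩⟩
        · exact ⟨hij.symm, Or.inr ⟨he, h', h⟩⟩)
    (by
      intro p q h
      rcases p with x | i <;> rcases q with y | j
      · exact (E.ll _ _).2 (H.adj_sub h)
      · exact (E.lr _ _).2 h.1
      · exact (E.rl _ _).2 h.1
      · exact (E.rr _ _).2 h.1)

lemma lift_full (E : Expn G v n G') (e : Bool) (H : G.Subgraph) : Full (lift E e H) :=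
  sub_full _ _ _

lemma lift_adj (E : Expn G v n G') (e : Bool) (H : G.Subgraph) {p q} (h : G'.Adj p q)
    (hne : proj v p ≠ proj v q) : (lift E e H).Adj p q ↔ H.Adj (proj v p) (proj v q) := by
  rcases p with x | i <;> rcases q with y | j
  · exact Iff.rfl
  · have hx := (E.lr _ _).1 h
    change x = n j ∧ H.Adj v x ↔ H.Adj x v
    rw [H.adj_comm]
    simp [hx]
  · have hx := (E.rl _ _).1 h
    change y = n i ∧ H.Adj v y ↔ H.Adj v y
    simp [hx]
  · exact absurd rfl hne

lemma down_lift (E : Expn G v n G') (e : Bool) (H : G.Subgraph) (hH : Full H) :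
    down E (lift E e H) = H := by
  apply ext_full (down_full _ _) hH
  have key : ∀ x y, G.Adj x y → ((down E (lift E e H)).Adj x y ↔ H.Adj x y) := by
    intro x y h
    obtain ⟨p, q, rfl, rfl, hpq⟩ := E.lift_edge h
    rw [down_adj E _ hpq h.ne, lift_adj E _ _ hpq h.ne]
  intro x y
  exact ⟨fun h => (key x y h.adj_sub).1 h, fun h => (key x y h.adj_sub).2 h⟩

lemma lift_spk (E : Expn G v n G') (e : Bool) (H : G.Subgraph) (i : Fin 3) :
    spk n (lift E e H) i ↔ H.Adj v (n i) :=
  lift_adj E e H ((E.rl _ _).2 rfl) (Ne.symm (n i).2)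

lemma lift_short (E : Expn G v n G') (H : G.Subgraph) (i j : Fin 3) :
    tri (lift E false H) i j ↔ i ≠ j ∧ H.Adj v (n i) ∧ H.Adj v (n j) := by
  change (i ≠ j ∧ ((false = true ∧ _) ∨ (false = false ∧ _ ∧ _))) ↔ _
  simp

lemma lift_long (E : Expn G v n G') (H : G.Subgraph) (i j k : Fin 3) (hij : i ≠ j) (hik : i ≠ k)
    (hjk : j ≠ k) : tri (lift E true H) i j ↔ H.Adj v (n k) := by
  change (i ≠ j ∧ ((true = true ∧ ∃ k, k ≠ i ∧ k ≠ j ∧ H.Adj v (n k)) ∨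
      (true = false ∧ _ ∧ _))) ↔ _
  constructor
  · rintro ⟨_, ⟨_, l, h1, h2, h⟩ | ⟨h, _⟩⟩
    · have : l = k := by omega
      subst this
      exact h
    · cases h
  · intro h
    exact ⟨hij, Or.inl ⟨rfl, k, hik.symm, hjk.symm, h⟩⟩

lemma lift_loc (E : Expn G v n G') (e : Bool) (H : G.Subgraph) (hH : Ev H.Adj v) :
    Loc n (lift E e H) ∧ ¬ AllT (lift E e H) := by
  rw [ev_v E] at hH
  unfold Loc AllT
  cases e
  · simp only [lift_spk, lift_short]
    have h01 : (0 : Fin 3) ≠ 1 := by decide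
    have h02 : (0 : Fin 3) ≠ 2 := by decide
    have h12 : (1 : Fin 3) ≠ 2 := by decide
    simp only [h01, h02, h12, ne_eq, not_false_eq_true, true_and]
    generalize H.Adj v (n 0) = A at *
    generalize H.Adj v (n 1) = B at *
    generalize H.Adj v (n 2) = D at *
    by_cases hA : A <;> by_cases hB : B <;> by_cases hD : D <;> simp_all
  · simp only [lift_spk]
    rw [lift_long E H 0 1 2 (by decide) (by decide) (by decide),
      lift_long E H 0 2 1 (by decide) (by decide) (by decide),
      lift_long E H 1 2 0 (by decide) (by decide) (by decide)]
    generalize H.Adj v (n 0) = A at *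
    generalize H.Adj v (n 1) = B at *
    generalize H.Adj v (n 2) = D at *
    by_cases hA : A <;> by_cases hB : B <;> by_cases hD : D <;> simp_all

lemma lift_circ (E : Expn G v n G') (e : Bool) (H : G.Subgraph) (hf : Full H) (hH : Circ H.Adj) :
    Circ (lift E e H).Adj := by
  obtain ⟨h1, h2⟩ := lift_loc E e H (hH.2.1 v)
  rw [← circ_down E _ h1 h2, down_lift E e H hf]
  exact hH

lemma tri_ext (E : Expn G v n G') (H K : G'.Subgraph) (hH : Full H) (hK : Full K)
    (h1 : ∀ p q, G'.Adj p q → proj v p ≠ proj v q → (H.Adj p q ↔ K.Adj p q))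
    (h01 : tri H 0 1 ↔ tri K 0 1) (h02 : tri H 0 2 ↔ tri K 0 2)
    (h12 : tri H 1 2 ↔ tri K 1 2) : H = K := by
  apply ext_full hH hK
  have key : ∀ p q, G'.Adj p q → (H.Adj p q ↔ K.Adj p q) := by
    intro p q h
    by_cases hne : proj v p = proj v q
    · rcases p with x | i <;> rcases q with y | j
      · have : x = y := Subtype.ext hne
        subst this
        exact absurd h (G'.loopless.irrefl _)
      · exact absurd hne x.2
      · exact absurd hne.symm y.2
      · rw [E.rr] at h
        fin_cases i <;> fin_cases j <;> first | exact absurd rfl h | skip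
        · exact h01
        · exact h02
        · rw [H.adj_comm, K.adj_comm]; exact h01
        · exact h12
        · rw [H.adj_comm, K.adj_comm]; exact h02
        · rw [H.adj_comm, K.adj_comm]; exact h12
    · exact h1 p q h hne
  exact fun p q => ⟨fun h => (key p q h.adj_sub).1 h, fun h => (key p q h.adj_sub).2 h⟩

lemma lift_down_adj (E : Expn G v n G') (e : Bool) (H : G'.Subgraph) (p q) (h : G'.Adj p q)
    (hne : proj v p ≠ proj v q) : (lift E e (down E H)).Adj p q ↔ H.Adj p q := by
  rw [lift_adj E e _ h hne, down_adj E H h hne]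

lemma eq_short (E : Expn G v n G') (H : G'.Subgraph) (hf : Full H) (hl : Loc n H)
    (h1 : ¬ (tri H 0 1 ∧ tri H 0 2)) (h2 : ¬ (tri H 0 1 ∧ tri H 1 2))
    (h3 : ¬ (tri H 0 2 ∧ tri H 1 2)) : lift E false (down E H) = H := by
  obtain ⟨l0, l1, l2⟩ := hl
  have h01 : (0 : Fin 3) ≠ 1 := by decide
  have h02 : (0 : Fin 3) ≠ 2 := by decide
  have h12 : (1 : Fin 3) ≠ 2 := by decide
  apply tri_ext E _ _ (lift_full _ _ _) hf (lift_down_adj E false H) <;>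
    simp only [lift_short, h01, h02, h12, ne_eq, not_false_eq_true, true_and, down_spoke] <;>
    unfold spk at l0 l1 l2 <;> simp only [l0, l1, l2] <;> clear l0 l1 l2 <;>
    generalize tri H 0 1 = A at * <;> generalize tri H 0 2 = B at * <;>
    generalize tri H 1 2 = D at * <;>
    by_cases hA : A <;> by_cases hB : B <;> by_cases hD : D <;> simp_all

lemma eq_long (E : Expn G v n G') (H : G'.Subgraph) (hf : Full H) (hl : Loc n H)
    (h : (tri H 0 1 ↔ ¬ (tri H 0 2 ↔ tri H 1 2))) : lift E true (down E H) = H := by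
  obtain ⟨l0, l1, l2⟩ := hl
  apply tri_ext E _ _ (lift_full _ _ _) hf (lift_down_adj E true H)
  · rw [lift_long E _ 0 1 2 (by decide) (by decide) (by decide), down_spoke]
    unfold spk at l2
    rw [l2]
    clear l0 l1 l2
    generalize tri H 0 1 = A at *
    generalize tri H 0 2 = B at *
    generalize tri H 1 2 = D at *
    by_cases hA : A <;> by_cases hB : B <;> by_cases hD : D <;> simp_all
  · rw [lift_long E _ 0 2 1 (by decide) (by decide) (by decide), down_spoke]
    unfold spk at l1
    rw [l1]
    clear l0 l1 l2
    generalize tri H 0 1 = A at *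
    generalize tri H 0 2 = B at *
    generalize tri H 1 2 = D at *
    by_cases hA : A <;> by_cases hB : B <;> by_cases hD : D <;> simp_all
  · rw [lift_long E _ 1 2 0 (by decide) (by decide) (by decide), down_spoke]
    unfold spk at l0
    rw [l0]
    clear l0 l1 l2
    generalize tri H 0 1 = A at *
    generalize tri H 0 2 = B at *
    generalize tri H 1 2 = D at *
    by_cases hA : A <;> by_cases hB : B <;> by_cases hD : D <;> simp_all

/-- the triangle -/
def trg (E : Expn G v n G') : G'.Subgraph :=
  sub (fun p q => ∃ i j, i ≠ j ∧ p = Sum.inr i ∧ q = Sum.inr j)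
    (by rintro p q ⟨i, j, h, hp, hq⟩; exact ⟨j, i, h.symm, hq, hp⟩)
    (by rintro p q ⟨i, j, h, rfl, rfl⟩; exact (E.rr _ _).2 h)

lemma trg_full (E : Expn G v n G') : Full (trg E) := sub_full _ _ _

lemma trg_tri (E : Expn G v n G') (i j : Fin 3) : tri (trg E) i j ↔ i ≠ j := by
  constructor
  · rintro ⟨i', j', h, hi, hj⟩
    cases hi; cases hj; exact h
  · intro h
    exact ⟨i, j, h, rfl, rfl⟩

lemma trg_out (E : Expn G v n G') {p q} (h : proj v p ≠ proj v q) : ¬ (trg E).Adj p q := by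
  rintro ⟨i, j, _, rfl, rfl⟩
  exact h rfl

lemma trg_circ (E : Expn G v n G') : Circ (trg E).Adj := by
  refine ⟨⟨Sum.inr 0, Sum.inr 1, (trg_tri E 0 1).2 (by decide)⟩, ?_, ?_⟩
  · intro p
    rcases p with x | i
    · rintro ⟨y, i, j, _, h, _⟩
      cases h
    · revert i
      rw [← loc_iff E]
      have hs : ∀ i, ¬ spk n (trg E) i := fun i => trg_out E (Ne.symm (n i).2)
      unfold Loc
      simp [hs, trg_tri]
  · rintro S hS p q p' q' ⟨i, _, _, rfl, _⟩ ⟨j, _, _, rfl, _⟩ hi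
    by_cases hij : i = j
    · subst hij; exact hi
    · exact hS _ _ ((trg_tri E i j).2 hij) hi

lemma eq_trg (E : Expn G v n G') (H : G'.Subgraph) (hf : Full H) (hc : Circ H.Adj)
    (hT : AllT H) : H = trg E := by
  obtain ⟨t1, t2, t3⟩ := hT
  have hl := (loc_iff E H).2 fun i => hc.2.1 _
  have hs : ∀ i, ¬ spk n H i := by
    obtain ⟨l0, l1, l2⟩ := hl
    intro i
    fin_cases i
    · change ¬ spk n H 0
      rw [l0]; tauto
    · change ¬ spk n H 1
      rw [l1]; tauto
    · change ¬ spk n H 2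
      rw [l2]; tauto
  have hr : ∀ i p, H.Adj (Sum.inr i) p → p ∈ Set.range (Sum.inr : Fin 3 → {x : V // x ≠ v} ⊕ Fin 3) := by
    intro i p h
    rcases p with x | j
    · have := (E.rl _ _).1 h.adj_sub
      subst this
      exact absurd h (hs i)
    · exact ⟨j, rfl⟩
  have key := hc.2.2 (Set.range Sum.inr) (by rintro p q h ⟨i, rfl⟩; exact hr i q h)
  have key2 : ∀ p q, H.Adj p q → p ∈ Set.range (Sum.inr : Fin 3 → {x : V // x ≠ v} ⊕ Fin 3) :=
    fun p q h => key (Sum.inr 0) p (Sum.inr 1) q t1 h ⟨0, rfl⟩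
  apply tri_ext E _ _ hf (trg_full E)
  · intro p q _ hne
    refine iff_of_false ?_ (trg_out E hne)
    intro h
    obtain ⟨i, rfl⟩ := key2 p q h
    obtain ⟨j, rfl⟩ := key2 q _ h.symm
    exact hne rfl
  · exact iff_of_true t1 ((trg_tri E _ _).2 (by decide))
  · exact iff_of_true t2 ((trg_tri E _ _).2 (by decide))
  · exact iff_of_true t3 ((trg_tri E _ _).2 (by decide))

/-! ### Covers -/

/-- counts of triangle edges only need to be checked for three pairs -/
lemma cidc_of (E : Expn G v n G') (C : Multiset G'.Subgraph) (h : ∀ H ∈ C, Full H ∧ Circ H.Adj)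
    (h1 : ∀ p q, G'.Adj p q → proj v p ≠ proj v q → cnt C (fun H => H.Adj p q) = 2)
    (h01 : cnt C (fun H => tri H 0 1) = 2) (h02 : cnt C (fun H => tri H 0 2) = 2)
    (h12 : cnt C (fun H => tri H 1 2) = 2) : IsCiDC G' C := by
  rw [isCiDC_iff]
  refine ⟨h, ?_⟩
  intro p q hpq
  by_cases hne : proj v p = proj v q
  · rcases p with x | i <;> rcases q with y | j
    · have : x = y := Subtype.ext hne
      subst this
      exact absurd hpq (G'.loopless.irrefl _)
    · exact absurd hne x.2
    · exact absurd hne.symm y.2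
    · rw [E.rr] at hpq
      have hsymm : ∀ p q, cnt C (fun H => H.Adj p q) = cnt C (fun H => H.Adj q p) :=
        fun p q => cnt_congr fun H _ => H.adj_comm _ _
      fin_cases i <;> fin_cases j <;> first | exact absurd rfl hpq | skip
      · exact h01
      · exact h02
      · rw [hsymm]; exact h01
      · exact h12
      · rw [hsymm]; exact h02
      · rw [hsymm]; exact h12
  · exact h1 p q hpq hne

lemma long_cidc (E : Expn G v n G') (C : Multiset G.Subgraph) (hC : IsCiDC G C) :
    IsCiDC G' (C.map (lift E true)) := by
  rw [isCiDC_iff] at hC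
  obtain ⟨hc, h2⟩ := hC
  have hvn : ∀ i, cnt C (fun H => H.Adj v (n i)) = 2 := fun i => h2 _ _ ((E.hv _).2 ⟨i, rfl⟩)
  apply cidc_of E
  · intro H hH
    obtain ⟨K, hK, rfl⟩ := Multiset.mem_map.1 hH
    exact ⟨lift_full _ _ _, lift_circ E _ K (hc K hK).1 (hc K hK).2⟩
  · intro p q hpq hne
    simp only [cnt_map, lift_adj E _ _ hpq hne]
    exact h2 _ _ (E.proj_adj hpq hne)
  · simp only [cnt_map, lift_long E _ 0 1 2 (by decide) (by decide) (by decide), hvn]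
  · simp only [cnt_map, lift_long E _ 0 2 1 (by decide) (by decide) (by decide), hvn]
  · simp only [cnt_map, lift_long E _ 1 2 0 (by decide) (by decide) (by decide), hvn]

lemma short_cidc (E : Expn G v n G') (C : Multiset G.Subgraph) (hC : IsCiDC G C) :
    IsCiDC G' (trg E ::ₘ C.map (lift E false)) := by
  rw [isCiDC_iff] at hC
  obtain ⟨hc, h2⟩ := hC
  have hvn : ∀ i, cnt C (fun H => H.Adj v (n i)) = 2 := fun i => h2 _ _ ((E.hv _).2 ⟨i, rfl⟩)
  obtain ⟨p1, p2, p3⟩ := pair_count C (fun H => H.Adj v (n 0)) (fun H => H.Adj v (n 1))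
    (fun H => H.Adj v (n 2)) (fun H hH => (ev_v E H).1 ((hc H hH).2.2.1 v)) (hvn 0) (hvn 1) (hvn 2)
  have h01 : (0 : Fin 3) ≠ 1 := by decide
  have h02 : (0 : Fin 3) ≠ 2 := by decide
  have h12 : (1 : Fin 3) ≠ 2 := by decide
  apply cidc_of E
  · intro H hH
    rcases Multiset.mem_cons.1 hH with rfl | hH
    · exact ⟨trg_full E, trg_circ E⟩
    obtain ⟨K, hK, rfl⟩ := Multiset.mem_map.1 hH
    exact ⟨lift_full _ _ _, lift_circ E _ K (hc K hK).1 (hc K hK).2⟩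
  · intro p q hpq hne
    simp only [cnt_cons, cnt_map, lift_adj E _ _ hpq hne, trg_out E hne, if_false, add_zero]
    exact h2 _ _ (E.proj_adj hpq hne)
  · simp only [cnt_cons, cnt_map, lift_short, trg_tri, ne_eq, h01, not_false_eq_true, true_and,
      p1, if_true]
  · simp only [cnt_cons, cnt_map, lift_short, trg_tri, ne_eq, h02, not_false_eq_true, true_and,
      p2, if_true]
  · simp only [cnt_cons, cnt_map, lift_short, trg_tri, ne_eq, h12, not_false_eq_true, true_and,
      p3, if_true]

lemma map_id_of {α : Type*} (C : Multiset α) (f : α → α) (h : ∀ a ∈ C, f a = a) :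
    C.map f = C := by
  rw [Multiset.map_congr rfl h, Multiset.map_id']

/-- contraction of a cover all of whose members avoid the full triangle -/
lemma down_cidc (E : Expn G v n G') (C : Multiset G'.Subgraph)
    (hc : ∀ H ∈ C, Full H ∧ Circ H.Adj ∧ ¬ AllT H)
    (h1 : ∀ p q, G'.Adj p q → proj v p ≠ proj v q → cnt C (fun H => H.Adj p q) = 2) :
    IsCiDC G (C.map (down E)) := by
  rw [isCiDC_iff]
  constructor
  · intro H hH
    obtain ⟨K, hK, rfl⟩ := Multiset.mem_map.1 hH
    obtain ⟨k1, k2, k3⟩ := hc K hK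
    exact ⟨down_full _ _, (circ_down E K ((loc_iff E K).2 fun i => k2.2.1 _) k3).2 k2⟩
  · intro x y hxy
    obtain ⟨p, q, rfl, rfl, hpq⟩ := E.lift_edge hxy
    simp only [cnt_map, down_adj E _ hpq hxy.ne]
    exact h1 p q hpq hxy.ne

lemma surj (E : Expn G v n G') (C : Multiset G'.Subgraph) (hC : IsCiDC G' C) :
    (∃ D, IsCiDC G D ∧ trg E ::ₘ D.map (lift E false) = C) ∨
    (∃ D, IsCiDC G D ∧ D.map (lift E true) = C) := by
  rw [isCiDC_iff] at hC
  obtain ⟨hc, h2⟩ := hC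
  have hl : ∀ H ∈ C, Loc n H := fun H hH => (loc_iff E H).2 fun i => (hc H hH).2.2.1 _
  have hm := master C (fun H => tri H 0 1) (fun H => tri H 0 2) (fun H => tri H 1 2)
    (fun H => spk n H 2) (fun H => spk n H 1) (fun H => spk n H 0)
    (fun H hH => (hl H hH).2.2) (fun H hH => (hl H hH).2.1) (fun H hH => (hl H hH).1)
    (h2 _ _ ((E.rr _ _).2 (by decide))) (h2 _ _ ((E.rr _ _).2 (by decide)))
    (h2 _ _ ((E.rr _ _).2 (by decide))) (h2 _ _ ((E.rl _ _).2 rfl))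
    (h2 _ _ ((E.rl _ _).2 rfl)) (h2 _ _ ((E.rl _ _).2 rfl))
  rcases hm with ⟨m7, -, -, -, m1, m2, m3⟩ | ⟨m7, m1, m2, m3, -, -, -⟩
  · left
    have m1 := cnt_zero_not m1
    have m2 := cnt_zero_not m2
    have m3 := cnt_zero_not m3
    simp only [bits_eq, iff_true, iff_false, Bool.false_eq_true] at m1 m2 m3 m7
    have hex : trg E ∈ C := by
      obtain ⟨H, hH, hA⟩ := cnt_pos_ex (by omega :
        0 < cnt C (fun H => tri H 0 1 ∧ tri H 0 2 ∧ tri H 1 2))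
      exact eq_trg E H (hc H hH).1 (hc H hH).2 hA ▸ hH
    obtain ⟨B, rfl⟩ := Multiset.exists_cons_of_mem hex
    have ht : AllT (trg E) := by
      unfold AllT; simp [trg_tri]
    have hB : ∀ H ∈ B, ¬ AllT H := by
      have ht' : tri (trg E) 0 1 ∧ tri (trg E) 0 2 ∧ tri (trg E) 1 2 := ht
      rw [cnt_cons] at m7
      rw [if_pos ht'] at m7
      have m8 : cnt B (fun H => tri H 0 1 ∧ tri H 0 2 ∧ tri H 1 2) = 0 := by omega
      exact cnt_zero_not m8
    have hB' : ∀ H ∈ B, Full H ∧ Circ H.Adj ∧ ¬ AllT H := fun H hH =>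
      ⟨(hc H (Multiset.mem_cons_of_mem hH)).1, (hc H (Multiset.mem_cons_of_mem hH)).2, hB H hH⟩
    refine ⟨B.map (down E), down_cidc E B hB' ?_, ?_⟩
    · intro p q hpq hne
      have := h2 p q hpq
      rw [cnt_cons] at this
      simpa only [trg_out E hne, if_false, add_zero] using this
    · rw [Multiset.map_map, map_id_of]
      intro H hH
      have hHC := Multiset.mem_cons_of_mem (b := trg E) hH
      have q1 := m1 H hHC
      have q2 := m2 H hHC
      have q3 := m3 H hHC
      have q4 := hB H hH
      unfold AllT at q4
      exact eq_short E H (hB' H hH).1 (hl H hHC) (by tauto) (by tauto) (by tauto)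
  · right
    have m1 := cnt_zero_not m1
    have m2 := cnt_zero_not m2
    have m3 := cnt_zero_not m3
    have m7 := cnt_zero_not m7
    simp only [bits_eq] at m1 m2 m3 m7
    simp only [iff_true, iff_false, Bool.false_eq_true] at m1 m2 m3 m7
    refine ⟨C.map (down E), down_cidc E C ?_ ?_, ?_⟩
    · exact fun H hH => ⟨(hc H hH).1, (hc H hH).2, m7 H hH⟩
    · intro p q hpq _
      exact h2 p q hpq
    · rw [Multiset.map_map, map_id_of]
      intro H hH
      have q1 := m1 H hH
      have q2 := m2 H hH
      have q3 := m3 H hH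
      have q4 := m7 H hH
      exact eq_long E H (hc H hH).1 (hl H hH) (by tauto)

lemma down_map_lift (E : Expn G v n G') (e : Bool) (C : Multiset G.Subgraph) (hC : IsCiDC G C) :
    (C.map (lift E e)).map (down E) = C := by
  rw [Multiset.map_map, map_id_of]
  intro H hH
  exact down_lift E e H (((isCiDC_iff G C).1 hC).1 H hH).1

lemma step (E : Expn G v n G') (hfin : {C : Multiset G.Subgraph | IsCiDC G C}.Finite) :
    {C : Multiset G'.Subgraph | IsCiDC G' C}.Finite ∧ nu G' = 2 * nu G := by
  have hset : {C : Multiset G'.Subgraph | IsCiDC G' C} =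
      (fun D => trg E ::ₘ D.map (lift E false)) '' {C : Multiset G.Subgraph | IsCiDC G C} ∪
      (fun D => D.map (lift E true)) '' {C : Multiset G.Subgraph | IsCiDC G C} := by
    ext C
    constructor
    · intro h
      exact surj E C h
    · rintro (⟨D, hD, rfl⟩ | ⟨D, hD, rfl⟩)
      · exact short_cidc E D hD
      · exact long_cidc E D hD
  have i1 : Set.InjOn (fun D => trg E ::ₘ D.map (lift E false))
      {C : Multiset G.Subgraph | IsCiDC G C} := by
    intro A hA B hB h
    have h' := (Multiset.cons_inj_right _).1 h
    rw [← down_map_lift E false A hA, ← down_map_lift E false B hB, h']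
  have i2 : Set.InjOn (fun D => D.map (lift E true))
      {C : Multiset G.Subgraph | IsCiDC G C} := by
    intro A hA B hB h
    have h' : A.map (lift E true) = B.map (lift E true) := h
    rw [← down_map_lift E true A hA, ← down_map_lift E true B hB, h']
  refine ⟨by rw [hset]; exact (hfin.image _).union (hfin.image _), ?_⟩
  unfold nu
  rw [hset, Set.ncard_union_eq ?_ (hfin.image _) (hfin.image _), i1.ncard_image, i2.ncard_image]
  · ring
  · rw [Set.disjoint_left]
    rintro C ⟨A, hA, rfl⟩ ⟨B, hB, h⟩
    have hmem : trg E ∈ B.map (lift E true) := by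
      have h' : B.map (lift E true) = trg E ::ₘ A.map (lift E false) := h
      rw [h']; exact Multiset.mem_cons_self _ _
    obtain ⟨K, hK, hKt⟩ := Multiset.mem_map.1 hmem
    have := (lift_loc E true K ((((isCiDC_iff G B).1 hB).1 K hK).2.2.1 v)).2
    rw [hKt] at this
    apply this
    unfold AllT; simp [trg_tri]

end expansion

/-! ### The base graph -/

/-- even subgraphs of the complete graph on four vertices -/
def kf (t : Bool × Bool × Bool) : Fin 4 → Fin 4 → Bool :=
  ![![false, xor t.1 t.2.1, xor t.1 t.2.2, xor t.2.1 t.2.2],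
    ![xor t.1 t.2.1, false, t.1, t.2.1],
    ![xor t.1 t.2.2, t.1, false, t.2.2],
    ![xor t.2.1 t.2.2, t.2.1, t.2.2, false]]

lemma kf_symm : ∀ t x y, kf t x y = true → kf t y x = true := by decide
lemma kf_ne : ∀ t x y, kf t x y = true → x ≠ y := by decide

def kg (t : Bool × Bool × Bool) : (completeGraph (Fin 4)).Subgraph :=
  sub (fun x y => kf t x y = true) (kf_symm t) (fun x y h => kf_ne t x y h)

lemma kf_conn : ∀ t : Bool × Bool × Bool, t ≠ (false, false, false) → ∀ S : Fin 4 → Bool,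
    (∀ x y, kf t x y = true → S x = true → S y = true) →
    ∀ x y, (∃ x', kf t x x' = true) → (∃ y', kf t y y' = true) → S x = true → S y = true := by
  decide +kernel

lemma k_ev (R : Fin 4 → Fin 4 → Prop) (hR : ∀ x, ¬ R x x) : (∀ x, Ev R x) ↔
    (R 0 1 ↔ ¬ (R 0 2 ↔ R 0 3)) ∧ (R 1 0 ↔ ¬ (R 1 2 ↔ R 1 3)) ∧
    (R 2 0 ↔ ¬ (R 2 1 ↔ R 2 3)) ∧ (R 3 0 ↔ ¬ (R 3 1 ↔ R 3 2)) := by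
  have h0 : Ev R 0 ↔ (R 0 1 ↔ ¬ (R 0 2 ↔ R 0 3)) := by
    apply ev3 _ _ _ _ _ (by decide) (by decide) (by decide)
    intro y hy
    fin_cases y <;> simp_all
  have h1 : Ev R 1 ↔ (R 1 0 ↔ ¬ (R 1 2 ↔ R 1 3)) := by
    apply ev3 _ _ _ _ _ (by decide) (by decide) (by decide)
    intro y hy
    fin_cases y <;> simp_all
  have h2 : Ev R 2 ↔ (R 2 0 ↔ ¬ (R 2 1 ↔ R 2 3)) := by
    apply ev3 _ _ _ _ _ (by decide) (by decide) (by decide)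
    intro y hy
    fin_cases y <;> simp_all
  have h3 : Ev R 3 ↔ (R 3 0 ↔ ¬ (R 3 1 ↔ R 3 2)) := by
    apply ev3 _ _ _ _ _ (by decide) (by decide) (by decide)
    intro y hy
    fin_cases y <;> simp_all
  rw [← h0, ← h1, ← h2, ← h3]
  constructor
  · intro h
    exact ⟨h 0, h 1, h 2, h 3⟩
  · rintro ⟨a, b, c, d⟩ x
    fin_cases x
    · exact a
    · exact b
    · exact c
    · exact d

lemma kg_circ (t : Bool × Bool × Bool) (ht : t ≠ (false, false, false)) : Circ (kg t).Adj := by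
  refine ⟨?_, ?_, ?_⟩
  · change ∃ x y, kf t x y = true
    revert t; decide
  · rw [k_ev _ (fun x h => kf_ne t x x h rfl)]
    change (kf t 0 1 = true ↔ ¬ (kf t 0 2 = true ↔ kf t 0 3 = true)) ∧
      (kf t 1 0 = true ↔ ¬ (kf t 1 2 = true ↔ kf t 1 3 = true)) ∧
      (kf t 2 0 = true ↔ ¬ (kf t 2 1 = true ↔ kf t 2 3 = true)) ∧
      (kf t 3 0 = true ↔ ¬ (kf t 3 1 = true ↔ kf t 3 2 = true))
    revert t; decide
  · intro S hS x y x' y' hx hy hxS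
    classical
    have := kf_conn t ht (fun z => decide (z ∈ S)) (by
      intro p q hpq hp
      simp only [decide_eq_true_eq] at hp ⊢
      exact hS p q hpq hp) x y ⟨x', hx⟩ ⟨y', hy⟩ (by simpa using hxS)
    simpa using this

noncomputable def kbits (H : (completeGraph (Fin 4)).Subgraph) : Bool × Bool × Bool :=
  bits (H.Adj 1 2) (H.Adj 1 3) (H.Adj 2 3)

lemma k_loc (H : (completeGraph (Fin 4)).Subgraph) (hc : Circ H.Adj) :
    (H.Adj 0 3 ↔ ¬ (H.Adj 1 3 ↔ H.Adj 2 3)) ∧ (H.Adj 0 2 ↔ ¬ (H.Adj 1 2 ↔ H.Adj 2 3)) ∧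
    (H.Adj 0 1 ↔ ¬ (H.Adj 1 2 ↔ H.Adj 1 3)) := by
  have h := (k_ev H.Adj (fun x h => h.adj_sub.ne rfl)).1 hc.2.1
  obtain ⟨h0, h1, h2, h3⟩ := h
  rw [H.adj_comm 3 0, H.adj_comm 3 1, H.adj_comm 3 2] at h3
  rw [H.adj_comm 2 0, H.adj_comm 2 1] at h2
  rw [H.adj_comm 1 0] at h1
  exact ⟨h3, h2, h1⟩

lemma kg_kbits (H : (completeGraph (Fin 4)).Subgraph) (hf : Full H) (hc : Circ H.Adj) :
    kg (kbits H) = H := by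
  apply ext_full (sub_full _ _ _) hf
  obtain ⟨h3, h2, h1⟩ := k_loc H hc
  have hirr : ∀ x, ¬ H.Adj x x := fun x h => h.adj_sub.ne rfl
  have c10 := H.adj_comm 1 0
  have c20 := H.adj_comm 2 0
  have c30 := H.adj_comm 3 0
  have c21 := H.adj_comm 2 1
  have c31 := H.adj_comm 3 1
  have c32 := H.adj_comm 3 2
  intro x y
  change kf (kbits H) x y = true ↔ _
  unfold kbits bits kf
  clear hc hf
  by_cases hA : H.Adj 1 2 <;> by_cases hB : H.Adj 1 3 <;> by_cases hD : H.Adj 2 3 <;>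
    simp only [hA, hB, hD, not_true, not_false_eq_true, iff_true, iff_false, iff_self] at h1 h2 h3 c21 c31 c32 ⊢ <;>
    fin_cases x <;> fin_cases y <;> simp_all

def M1 : Multiset (Bool × Bool × Bool) :=
  {(true, true, true), (true, false, false), (false, true, false), (false, false, true)}
def M2 : Multiset (Bool × Bool × Bool) :=
  {(false, true, true), (true, false, true), (true, true, false)}

lemma M_cidc (M : Multiset (Bool × Bool × Bool)) (h0 : (false, false, false) ∉ M)
    (h : ∀ x y : Fin 4, x ≠ y → M.countP (fun t => kf t x y = true) = 2) :
    IsCiDC (completeGraph (Fin 4)) (M.map kg) := by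
  rw [isCiDC_iff]
  constructor
  · intro H hH
    obtain ⟨t, ht, rfl⟩ := Multiset.mem_map.1 hH
    refine ⟨sub_full _ _ _, kg_circ t ?_⟩
    rintro rfl
    exact h0 ht
  · intro x y hxy
    rw [cnt_map]
    change cnt M (fun t => kf t x y = true) = 2
    rw [cnt_eq]
    exact h x y hxy

lemma k4_set : {C | IsCiDC (completeGraph (Fin 4)) C} = {M1.map kg, M2.map kg} := by
  ext C
  constructor
  · intro hC
    obtain ⟨hc, h2⟩ := (isCiDC_iff _ _).1 hC
    have h2' : ∀ x y : Fin 4, x ≠ y → cnt C (fun H => H.Adj x y) = 2 := fun x y h => h2 x y h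
    have hm := master C (fun H => H.Adj 1 2) (fun H => H.Adj 1 3) (fun H => H.Adj 2 3)
      (fun H => H.Adj 0 3) (fun H => H.Adj 0 2) (fun H => H.Adj 0 1)
      (fun H hH => (k_loc H (hc H hH).2).1) (fun H hH => (k_loc H (hc H hH).2).2.1)
      (fun H hH => (k_loc H (hc H hH).2).2.2)
      (h2' _ _ (by decide)) (h2' _ _ (by decide)) (h2' _ _ (by decide))
      (h2' _ _ (by decide)) (h2' _ _ (by decide)) (h2' _ _ (by decide))
    have hback : (C.map kbits).map kg = C := by
      rw [Multiset.map_map, map_id_of]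
      intro H hH
      exact kg_kbits H (hc H hH).1 (hc H hH).2
    have hcount : ∀ b, (C.map kbits).count b = cnt C (fun H => kbits H = b) := by
      intro b
      rw [← cnt_map kbits C (fun c => c = b), Multiset.count, cnt_eq]
      congr 1
      ext c
      exact eq_comm
    have hz : (C.map kbits).count (false, false, false) = 0 := by
      rw [Multiset.count_eq_zero]
      intro hmem
      obtain ⟨H, hH, hb⟩ := Multiset.mem_map.1 hmem
      obtain ⟨⟨x, y, hxy⟩, _⟩ := (hc H hH).2
      rw [← kg_kbits H (hc H hH).1 (hc H hH).2, hb] at hxy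
      have : ∀ x y, ¬ kf (false, false, false) x y = true := by decide
      exact this x y hxy
    change _ ∨ _
    rcases hm with ⟨a1, a2, a3, a4, a5, a6, a7⟩ | ⟨a1, a2, a3, a4, a5, a6, a7⟩
    · left
      have : C.map kbits = M1 := by
        ext ⟨a, b, c⟩
        cases a <;> cases b <;> cases c
        · rw [hz]; rfl
        all_goals rw [hcount]; first | exact a1 | exact a2 | exact a3 | exact a4 | exact a5 | exact a6 | exact a7
      rw [← this, hback]
    · right
      have : C.map kbits = M2 := by
        ext ⟨a, b, c⟩
        cases a <;> cases b <;> cases c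
        · rw [hz]; rfl
        all_goals rw [hcount]; first | exact a1 | exact a2 | exact a3 | exact a4 | exact a5 | exact a6 | exact a7
      change C = _
      rw [← this, hback]
  · rintro (rfl | rfl)
    · exact M_cidc M1 (by decide) (by decide)
    · exact M_cidc M2 (by decide) (by decide)

lemma k4_nu : nu (completeGraph (Fin 4)) = 2 := by
  unfold nu
  rw [k4_set, Set.ncard_pair]
  intro h
  have := congrArg Multiset.card h
  rw [Multiset.card_map, Multiset.card_map] at this
  revert this
  decide

/-! ### Conclusion -/

lemma klee_main {V : Type} {G : SimpleGraph V} (hK : IsKlee G) :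
    Finite V ∧ {C : Multiset G.Subgraph | IsCiDC G C}.Finite ∧
      ∃ m, Nat.card V = 2 * (m + 1) ∧ nu G = 2 ^ m := by
  induction hK with
  | base =>
    refine ⟨inferInstance, ?_, 1, by simp, by rw [k4_nu]; rfl⟩
    rw [k4_set]
    exact Set.toFinite _
  | @expand V G v a b c hab hac hbc hnbr G' hG' hK ih =>
    obtain ⟨hfin, hX, m, hm, hnu⟩ := ih
    have hadj : ∀ x, G.Adj v x ↔ x = a ∨ x = b ∨ x = c := by
      intro x
      have : x ∈ G.neighborSet v ↔ x ∈ ({a, b, c} : Set V) := by rw [hnbr]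
      exact this
    have ha : a ≠ v := ((hadj a).2 (by simp)).ne'
    have hb : b ≠ v := ((hadj b).2 (by simp)).ne'
    have hc : c ≠ v := ((hadj c).2 (by simp)).ne'
    let n : Fin 3 → {x : V // x ≠ v} := ![⟨a, ha⟩, ⟨b, hb⟩, ⟨c, hc⟩]
    have hrl : ∀ (i : Fin 3) (x : {x : V // x ≠ v}),
        ((i = 0 ∧ x.1 = a) ∨ (i = 1 ∧ x.1 = b) ∨ (i = 2 ∧ x.1 = c)) ↔ x = n i := by
      intro i x
      rw [Subtype.ext_iff]
      fin_cases i <;> simp [n]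
    have E : Expn G v n G' := by
      refine ⟨?_, ?_, ?_, ?_, ?_⟩
      · intro i j hij
        rw [Subtype.ext_iff] at hij
        fin_cases i <;> fin_cases j <;> simp_all [n]
      · intro x
        rw [hadj]
        simp only [← hrl]
        constructor
        · rintro (h | h | h)
          · exact ⟨0, Or.inl ⟨rfl, h⟩⟩
          · exact ⟨1, Or.inr (Or.inl ⟨rfl, h⟩)⟩
          · exact ⟨2, Or.inr (Or.inr ⟨rfl, h⟩)⟩
        · rintro ⟨i, h⟩
          tauto
      · intro x y
        exact hG' _ _
      · intro i x
        rw [hG', ← hrl]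
        exact Iff.rfl
      · intro i j
        exact hG' _ _
    obtain ⟨s1, s2⟩ := step E hX
    refine ⟨inferInstance, s1, m + 1, ?_, by rw [s2, hnu]; ring⟩
    classical
    have : Fintype V := Fintype.ofFinite V
    have h1 : Nat.card {x : V // x ≠ v} = Nat.card V - 1 := by
      rw [Nat.card_eq_fintype_card, Nat.card_eq_fintype_card]
      simp [Fintype.card_subtype_compl]
    rw [Nat.card_sum, h1, hm]
    simp
    omega

/-- Every Klee graph on `n` vertices has exactly `2^(n/2 - 1)` circuit double covers. -/
theorem stmt10 {V : Type} [Fintype V] (G : SimpleGraph V) (hK : IsKlee G) :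
    nu G = 2 ^ (Fintype.card V / 2 - 1) := by
  obtain ⟨_, _, m, hm, hnu⟩ := klee_main hK
  rw [Nat.card_eq_fintype_card] at hm
  rw [hnu, hm]
  congr 1
  omega

end CiDC
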